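/- arXiv:2004.02242 — 5 statements merged into one kernel-verified Lean document; each statement's English description precedes it below -/
import Mathlib

section
/- For all natural numbers n, m there exists a real polynomial P in two variables whose total degree is strictly less than n+m (with P = 0 when n+m = 0) such that, for f(x,y) = xⁿ·yᵐ, one has (𝓛f)(x,y) = λ_{n+m}·xⁿ·yᵐ + P(x,y) for all (x,y) ∈ ℝ². -/
/-!
Differentiating directly, the second-order part of `𝓛(xⁿyᵐ)` contributes
`(κ/8)(n(n-1)xⁿ⁻²yᵐ + m(m-1)xⁿyᵐ⁻²)` plus multiples of `xⁿyᵐ`, and the first-order part only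
multiples of `xⁿyᵐ`. With `s = n + m`, the coefficient of `xⁿyᵐ` is
`-(κ/8)(n(n-1) + m(m-1) + 2nm) - ((κ-2)/2 + κ/8)s = -(κ/8)s(s-1) - (5κ/8 - 1)s = λ_s`,
because `n(n-1) + m(m-1) + 2nm = s(s-1)`. The remaining terms have degree `s - 2`, or vanish.
-/

/-- Partial derivative in the first variable. -/
noncomputable def pdx (f : ℝ × ℝ → ℝ) (p : ℝ × ℝ) : ℝ :=
  deriv (fun u => f (u, p.2)) p.1

/-- Partial derivative in the second variable. -/
noncomputable def pdy (f : ℝ × ℝ → ℝ) (p : ℝ × ℝ) : ℝ :=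
  deriv (fun v => f (p.1, v)) p.2

/-- The second order differential operator
`𝓛f = (κ/8)(1−x²)∂²ₓf + (κ/8)(1−y²)∂²_yf − (κ/4)xy ∂ₓ∂_yf
      − ((κ−2)/2 + κ/8)x ∂ₓf − ((κ−2)/2 + κ/8)y ∂_yf`. -/
noncomputable def Lop (κ : ℝ) (f : ℝ × ℝ → ℝ) (p : ℝ × ℝ) : ℝ :=
  κ / 8 * (1 - p.1 ^ 2) * pdx (pdx f) p + κ / 8 * (1 - p.2 ^ 2) * pdy (pdy f) p
    - κ / 4 * p.1 * p.2 * pdx (pdy f) p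
    - ((κ - 2) / 2 + κ / 8) * p.1 * pdx f p
    - ((κ - 2) / 2 + κ / 8) * p.2 * pdy f p

/-- The eigenvalue `λ_s = −(κ/8)·s·(s + 4 − 8/κ)`. -/
noncomputable def lam (κ : ℝ) (s : ℕ) : ℝ := -(κ / 8) * s * (s + 4 - 8 / κ)

open MvPolynomial in
/-- The lower-order part `(κ/8)(n(n-1)xⁿ⁻²yᵐ + m(m-1)xⁿyᵐ⁻²)` of `𝓛(xⁿyᵐ)`. The truncated exponents
are harmless: a coefficient vanishes whenever its exponent truncates. -/
noncomputable def lowerPart (κ : ℝ) (n m : ℕ) : MvPolynomial (Fin 2) ℝ :=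
  C (κ / 8 * (n * (n - 1 : ℕ))) * (X 0 ^ (n - 2) * X 1 ^ m)
    + C (κ / 8 * (m * (m - 1 : ℕ))) * (X 0 ^ n * X 1 ^ (m - 2))

open MvPolynomial in
theorem totalDegree_term_lt (c : ℝ) (i j d : ℕ) (hd : 0 < d) (h : c = 0 ∨ i + j < d) :
    (C c * (X 0 ^ i * X 1 ^ j) : MvPolynomial (Fin 2) ℝ).totalDegree < d := by
  rcases h with rfl | h
  · simpa using hd
  · have h1 := totalDegree_mul (C c) (X 0 ^ i * X 1 ^ j : MvPolynomial (Fin 2) ℝ)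
    have h2 := totalDegree_mul (X 0 ^ i) (X 1 ^ j : MvPolynomial (Fin 2) ℝ)
    rw [totalDegree_C] at h1
    rw [totalDegree_X_pow, totalDegree_X_pow] at h2
    omega

theorem totalDegree_lowerPart_lt (κ : ℝ) (n m : ℕ) (h : 0 < n + m) :
    (lowerPart κ n m).totalDegree < n + m := by
  refine (MvPolynomial.totalDegree_add _ _).trans_lt (max_lt ?_ ?_)
  · refine totalDegree_term_lt _ _ _ _ h ?_
    rcases n with _ | _ | n
    · simp
    · simp
    · right; omega
  · refine totalDegree_term_lt _ _ _ _ h ?_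
    rcases m with _ | _ | m
    · simp
    · simp
    · right; omega

theorem pdx_monomial (c : ℝ) (n m : ℕ) :
    pdx (fun q => c * (q.1 ^ n * q.2 ^ m))
      = fun q => (c * n) * (q.1 ^ (n - 1) * q.2 ^ m) := by
  funext q
  simp only [pdx]
  rw [(((hasDerivAt_pow n q.1).mul_const (q.2 ^ m)).const_mul c).deriv]
  ring

theorem pdy_monomial (c : ℝ) (n m : ℕ) :
    pdy (fun q => c * (q.1 ^ n * q.2 ^ m))
      = fun q => (c * m) * (q.1 ^ n * q.2 ^ (m - 1)) := by
  funext q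
  simp only [pdy]
  rw [(((hasDerivAt_pow m q.2).const_mul (q.1 ^ n)).const_mul c).deriv]
  ring

/-- for all `n m : ℕ` there is a real polynomial `P` in two variables of
total degree strictly less than `n + m` (with `P = 0` when `n + m = 0`) such that
`𝓛(xⁿyᵐ) = λ_{n+m}·xⁿyᵐ + P(x,y)` for all `(x,y) ∈ ℝ²`. -/
theorem Lop_monomial (κ : ℝ) (hκ : κ ∈ Set.Ioo (4 : ℝ) 8) (n m : ℕ) :
    ∃ P : MvPolynomial (Fin 2) ℝ,
      (n + m = 0 → P = 0) ∧
      (P = 0 ∨ P.totalDegree < n + m) ∧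
      ∀ p : ℝ × ℝ,
        Lop κ (fun q => q.1 ^ n * q.2 ^ m) p
          = lam κ (n + m) * (p.1 ^ n * p.2 ^ m) + MvPolynomial.eval ![p.1, p.2] P := by
  have h0 : n + m = 0 → lowerPart κ n m = 0 := by
    intro h
    obtain ⟨rfl, rfl⟩ : n = 0 ∧ m = 0 := by omega
    simp [lowerPart]
  refine ⟨lowerPart κ n m, h0, ?_, ?_⟩
  · rcases Nat.eq_zero_or_pos (n + m) with h | h
    · exact Or.inl (h0 h)
    · exact Or.inr (totalDegree_lowerPart_lt κ n m h)
  · rintro ⟨x, y⟩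
    have hk : κ ≠ 0 := by linarith [hκ.1]
    have hf : (fun q : ℝ × ℝ => q.1 ^ n * q.2 ^ m)
        = fun q => (1 : ℝ) * (q.1 ^ n * q.2 ^ m) := by simp
    rw [hf]
    simp only [Lop, lam, lowerPart, pdx_monomial, pdy_monomial, map_add, map_mul, map_pow,
      MvPolynomial.eval_C, MvPolynomial.eval_X, Matrix.cons_val_zero, Matrix.cons_val_one]
    -- Splitting off the exponents 0 and 1 removes every truncated subtraction.
    rcases n with _ | _ | n <;> rcases m with _ | _ | m <;>
      simp [-mul_eq_mul_right_iff, -mul_eq_mul_left_iff] <;> field_simp <;> ring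
end

section
/- Let α₀ > 0 and let Q : (0, 1/6] → [0,∞) satisfy (1−R)^{2α₀}·Q(R) ≤ Q(r) ≤ (1+R)^{2α₀}·Q(R) whenever 0 < r ≤ R/2 and R ≤ 1/6. Then the limit ĉ := lim_{r→0⁺} Q(r) exists in [0,∞), and for every R ∈ (0,1/6] one has ĉ·(1+R)^{−2α₀} ≤ Q(R) ≤ ĉ·(1−R)^{−2α₀}. -/
/-!
Writing `a = 2 * α₀`, for small `R` all values `Q r` with `0 < r ≤ R / 2` lie in the interval
`[(1 - R) ^ a * Q R, (1 + R) ^ a * Q R]`. Taking `R = 1 / 6` shows that `Q` is bounded by some `M`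
near `0`, so the length of this interval is at most `((1 + R) ^ a - (1 - R) ^ a) * M`, which tends
to `0` with `R`. Hence `Q` is Cauchy along `𝓝[>] 0` and converges. Letting `r → 0⁺` in the
hypothesis with `R` fixed gives `(1 - R) ^ a * Q R ≤ c ≤ (1 + R) ^ a * Q R`, which is the claimed
two-sided bound.
-/

/-- let `α₀ > 0` and `Q : (0,1/6] → [0,∞)` satisfy
`(1−R)^{2α₀}·Q(R) ≤ Q(r) ≤ (1+R)^{2α₀}·Q(R)` whenever `0 < r ≤ R/2` and `R ≤ 1/6`.
Then `ĉ := lim_{r→0⁺} Q(r)` exists in `[0,∞)` and for every `R ∈ (0,1/6]`,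
`ĉ·(1+R)^{−2α₀} ≤ Q(R) ≤ ĉ·(1−R)^{−2α₀}`. -/
theorem renewal_limit (α₀ : ℝ) (hα : 0 < α₀) (Q : ℝ → ℝ)
    (hQnonneg : ∀ r : ℝ, 0 < r → r ≤ 1 / 6 → 0 ≤ Q r)
    (hQ : ∀ r R : ℝ, 0 < r → r ≤ R / 2 → R ≤ 1 / 6 →
      (1 - R) ^ (2 * α₀) * Q R ≤ Q r ∧ Q r ≤ (1 + R) ^ (2 * α₀) * Q R) :
    ∃ c : ℝ, 0 ≤ c ∧
      Filter.Tendsto Q (nhdsWithin 0 (Set.Ioi 0)) (nhds c) ∧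
      ∀ R : ℝ, 0 < R → R ≤ 1 / 6 →
        c * (1 + R) ^ (-(2 * α₀)) ≤ Q R ∧ Q R ≤ c * (1 - R) ^ (-(2 * α₀)) := by
  have hmem : ∀ R : ℝ, 0 < R → Set.Ioc 0 R ∈ nhdsWithin (0 : ℝ) (Set.Ioi 0) :=
    fun R hR => Ioc_mem_nhdsGT hR
  obtain ⟨M, hM⟩ : ∃ M : ℝ, ∀ r, 0 < r → r ≤ 1 / 12 → Q r ≤ M :=
    ⟨_, fun r h0 h1 => (hQ r (1 / 6) h0 (by linarith) le_rfl).2⟩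
  have hlim : Filter.Tendsto (fun R : ℝ => ((1 + R) ^ (2 * α₀) - (1 - R) ^ (2 * α₀)) * M)
      (nhdsWithin 0 (Set.Ioi 0)) (nhds 0) := by
    have hc : ContinuousAt (fun R : ℝ => ((1 + R) ^ (2 * α₀) - (1 - R) ^ (2 * α₀)) * M) 0 := by
      refine ContinuousAt.mul (ContinuousAt.sub ?_ ?_) continuousAt_const
      · exact ContinuousAt.rpow_const (by fun_prop) (Or.inl (by norm_num))
      · exact ContinuousAt.rpow_const (by fun_prop) (Or.inl (by norm_num))
    have h := hc.tendsto
    simp only [add_zero, sub_zero, sub_self, zero_mul] at h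
    exact h.mono_left nhdsWithin_le_nhds
  obtain ⟨c, hc⟩ : ∃ c, Filter.Tendsto Q (nhdsWithin 0 (Set.Ioi 0)) (nhds c) := by
    rw [← cauchy_map_iff_exists_tendsto, Metric.cauchy_iff]
    refine ⟨inferInstance, fun ε hε => ?_⟩
    obtain ⟨R, hRε, hR0, hR1⟩ :=
      ((hlim.eventually_lt_const hε).and (hmem (1 / 12) (by norm_num))).exists
    refine ⟨Q '' Set.Ioc 0 (R / 2), Filter.image_mem_map (hmem _ (by linarith)), ?_⟩
    rintro _ ⟨r, ⟨hr0, hr1⟩, rfl⟩ _ ⟨s, ⟨hs0, hs1⟩, rfl⟩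
    have hr := hQ r R hr0 hr1 (by linarith)
    have hs := hQ s R hs0 hs1 (by linarith)
    have hmono : (1 - R) ^ (2 * α₀) ≤ (1 + R) ^ (2 * α₀) :=
      Real.rpow_le_rpow (by linarith) (by linarith) (by linarith)
    have hlen := mul_le_mul_of_nonneg_left (hM R hR0 hR1) (sub_nonneg.2 hmono)
    rw [Real.dist_eq, abs_lt]
    constructor <;> linarith
  refine ⟨c, ?_, hc, fun R hR0 hR1 => ?_⟩
  · exact ge_of_tendsto hc (Filter.mem_of_superset (hmem (1 / 6) (by norm_num))
      fun r hr => hQnonneg r hr.1 hr.2)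
  · have hlow : (1 - R) ^ (2 * α₀) * Q R ≤ c :=
      ge_of_tendsto hc (Filter.mem_of_superset (hmem (R / 2) (by linarith))
        fun r hr => (hQ r R hr.1 hr.2 hR1).1)
    have hup : c ≤ (1 + R) ^ (2 * α₀) * Q R :=
      le_of_tendsto hc (Filter.mem_of_superset (hmem (R / 2) (by linarith))
        fun r hr => (hQ r R hr.1 hr.2 hR1).2)
    have hp : 0 < (1 + R) ^ (2 * α₀) := Real.rpow_pos_of_pos (by linarith) _
    have hm : 0 < (1 - R) ^ (2 * α₀) := Real.rpow_pos_of_pos (by linarith) _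
    rw [Real.rpow_neg (by linarith), Real.rpow_neg (by linarith), ← div_eq_mul_inv,
      ← div_eq_mul_inv, div_le_iff₀ hp, le_div_iff₀ hm]
    constructor <;> linarith
end

section
/- Assume that for each j ∈ {1,2}, all t, s ∈ [0,∞) and every A ∈ Fʲ_t one has A ∩ {ω : u_j(ω,t) < s} ∈ Gʲ_s. Let T : Ω → [0,∞]² satisfy {T < t} ∈ F_t for every t ∈ ℝ₊² (i.e., T is a stopping time for the right-continuous augmentation of F). Then {u⊗(T) < s} ∈ G_s for every s ∈ ℝ₊² (i.e., u⊗(T) is a stopping time for the right-continuous augmentation of G), and moreover every A ⊆ Ω with A ∩ {T < t} ∈ F_t for all t ∈ ℝ₊² satisfies A ∩ {u⊗(T) < s} ∈ G_s for all s ∈ ℝ₊². -/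
/-!
By monotonicity and right-continuity, `u_j(T_j) < s_j` holds exactly when `T_j < q_j` and
`u_j(q_j) < s_j` for some `q_j` in a countable dense set. Hence `A ∩ {u⊗(T) < s}` is the countable
union over `(q₁, q₂)` of the sets `A ∩ {T < q} ∩ {u₁(q₁) < s₁} ∩ {u₂(q₂) < s₂}`. Here
`A ∩ {T < q}` lies in `F¹_{q₁} ⊔ F²_{q₂}`, so it suffices that intersecting with
`{u₁(q₁) < s₁} ∩ {u₂(q₂) < s₂}` maps `F¹_{q₁} ⊔ F²_{q₂}` into `G¹_{s₁} ⊔ G²_{s₂}`. The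
hypothesis gives this for each of the two factors, and a good-sets argument
(`measurableSet_sup_inter_inter`) extends it to the join. The statement about `{u⊗(T) < s}` itself
is the case `A = Ω`.
-/

open MeasureTheory
open scoped NNReal ENNReal

/-- Extension of a time change `u : [0,∞) → [0,∞]` to `[0,∞]` by `u(∞) := ∞`. -/
noncomputable def extApp (u : ℝ≥0 → ℝ≥0∞) (x : ℝ≥0∞) : ℝ≥0∞ :=
  if x = ∞ then ∞ else u x.toNNReal

/-- The time-changed value lies below `s` exactly when some term `q` of a fixed dense sequence
satisfies `x < q` and `u q < s`; this turns the event `{u(T) < s}` into a countable union. -/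
lemma extApp_lt_iff_exists_denseSeq {u : ℝ≥0 → ℝ≥0∞} (hmono : Monotone u)
    (hrc : ∀ t, ContinuousWithinAt u (Set.Ici t) t) (x s : ℝ≥0∞) :
    extApp u x < s ↔
      ∃ n : ℕ, x < (TopologicalSpace.denseSeq ℝ≥0 n : ℝ≥0∞) ∧
        u (TopologicalSpace.denseSeq ℝ≥0 n) < s := by
  constructor
  · intro h
    induction x with
    | top => simp [extApp] at h
    | coe t =>
      have h : u t < s := by simpa [extApp] using h
      obtain ⟨c, hc, hsub⟩ := mem_nhdsGE_iff_exists_Ico_subset.1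
        ((hrc t).eventually (gt_mem_nhds h))
      obtain ⟨q, ⟨hq, n, rfl⟩⟩ := (TopologicalSpace.denseRange_denseSeq ℝ≥0).inter_open_nonempty
        (Set.Ioo t c) isOpen_Ioo (Set.nonempty_Ioo.2 hc)
      exact ⟨n, by exact_mod_cast hq.1, hsub ⟨hq.1.le, hq.2⟩⟩
  · rintro ⟨n, hx, hu⟩
    lift x to ℝ≥0 using hx.ne_top
    have hx : x ≤ TopologicalSpace.denseSeq ℝ≥0 n := by exact_mod_cast hx.le
    simpa [extApp] using (hmono hx).trans_lt hu

/-- If the traces on `E₁` and `E₂` of the members of `m₁` and `m₂` are measurable for `g₁` and `g₂`,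
then the trace on `E₁ ∩ E₂` of every member of `m₁ ⊔ m₂` is measurable for `g₁ ⊔ g₂`: the sets
with measurable trace form a σ-algebra containing `m₁` and `m₂`. -/
lemma measurableSet_sup_inter_inter {Ω : Type*} {m₁ m₂ g₁ g₂ : MeasurableSpace Ω} {E₁ E₂ : Set Ω}
    (h₁ : ∀ A, MeasurableSet[m₁] A → MeasurableSet[g₁] (A ∩ E₁))
    (h₂ : ∀ A, MeasurableSet[m₂] A → MeasurableSet[g₂] (A ∩ E₂))
    {B : Set Ω} (hB : MeasurableSet[m₁ ⊔ m₂] B) :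
    MeasurableSet[g₁ ⊔ g₂] (B ∩ (E₁ ∩ E₂)) := by
  have h₁' : ∀ A, MeasurableSet[m₁] A → MeasurableSet[g₁ ⊔ g₂] (A ∩ E₁) := fun A hA =>
    (le_sup_left : g₁ ≤ g₁ ⊔ g₂) _ (h₁ A hA)
  have h₂' : ∀ A, MeasurableSet[m₂] A → MeasurableSet[g₁ ⊔ g₂] (A ∩ E₂) := fun A hA =>
    (le_sup_right : g₂ ≤ g₁ ⊔ g₂) _ (h₂ A hA)
  have hE₁ : MeasurableSet[g₁ ⊔ g₂] E₁ := by simpa using h₁' Set.univ MeasurableSet.univ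
  have hE₂ : MeasurableSet[g₁ ⊔ g₂] E₂ := by simpa using h₂' Set.univ MeasurableSet.univ
  let m : MeasurableSpace Ω :=
    { MeasurableSet' := fun B => MeasurableSet[g₁ ⊔ g₂] (B ∩ (E₁ ∩ E₂))
      measurableSet_empty := by simp
      measurableSet_compl := fun B hB => by
        have : Bᶜ ∩ (E₁ ∩ E₂) = (E₁ ∩ E₂) \ (B ∩ (E₁ ∩ E₂)) := by
          ext ω; simp only [Set.mem_inter_iff, Set.mem_compl_iff, Set.mem_sdiff]; tauto
        rw [this]
        exact (hE₁.inter hE₂).diff hB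
      measurableSet_iUnion := fun f hf => by
        rw [Set.iUnion_inter]
        exact MeasurableSet.iUnion hf }
  have hle : m₁ ⊔ m₂ ≤ m := by
    refine sup_le (fun A hA => ?_) (fun A hA => ?_)
    · change MeasurableSet[g₁ ⊔ g₂] (A ∩ (E₁ ∩ E₂))
      rw [← Set.inter_assoc]
      exact (h₁' A hA).inter hE₂
    · change MeasurableSet[g₁ ⊔ g₂] (A ∩ (E₁ ∩ E₂))
      rw [Set.inter_comm E₁, ← Set.inter_assoc]
      exact (h₂' A hA).inter hE₁
  exact hle B hB

/-- two-parameter time change: let `Fʲ`, `Gʲ` (`j = 1,2`) be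
`[0,∞)`-indexed filtrations on `Ω`, `F (t₁,t₂) = F¹ t₁ ⊔ F² t₂` and
`G (s₁,s₂) = G¹ s₁ ⊔ G² s₂` the associated separable ℝ₊²-indexed filtrations, and
`u_j : Ω × [0,∞) → [0,∞]` nondecreasing and right-continuous in the time variable,
with `A ∩ {u_j(·,t) < s} ∈ Gʲ_s` for all `t, s ≥ 0` and `A ∈ Fʲ_t`.  If
`T : Ω → [0,∞]²` satisfies `{T < t} ∈ F_t` for every `t ∈ ℝ₊²` (componentwise strict
inequality), then `{u⊗(T) < s} ∈ G_s` for every `s ∈ ℝ₊²`, and every `A ⊆ Ω` with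
`A ∩ {T < t} ∈ F_t` for all `t ∈ ℝ₊²` satisfies `A ∩ {u⊗(T) < s} ∈ G_s` for all
`s ∈ ℝ₊²`, where `u⊗(T)(ω) = (u₁(ω,T₁(ω)), u₂(ω,T₂(ω)))`. -/
theorem timeChange_stoppingTime_two_parameter
    {Ω : Type*} (F1 F2 G1 G2 : ℝ≥0 → MeasurableSpace Ω)
    (hF1 : Monotone F1) (hF2 : Monotone F2)
    (hG1 : Monotone G1) (hG2 : Monotone G2)
    (u1 u2 : Ω → ℝ≥0 → ℝ≥0∞)
    (hu1mono : ∀ ω, Monotone (u1 ω)) (hu2mono : ∀ ω, Monotone (u2 ω))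
    (hu1rc : ∀ ω t, ContinuousWithinAt (u1 ω) (Set.Ici t) t)
    (hu2rc : ∀ ω t, ContinuousWithinAt (u2 ω) (Set.Ici t) t)
    (hFG1 : ∀ (t s : ℝ≥0) (A : Set Ω), MeasurableSet[F1 t] A →
      MeasurableSet[G1 s] (A ∩ {ω | u1 ω t < (s : ℝ≥0∞)}))
    (hFG2 : ∀ (t s : ℝ≥0) (A : Set Ω), MeasurableSet[F2 t] A →
      MeasurableSet[G2 s] (A ∩ {ω | u2 ω t < (s : ℝ≥0∞)}))
    (T : Ω → ℝ≥0∞ × ℝ≥0∞)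
    (hT : ∀ t : ℝ≥0 × ℝ≥0, MeasurableSet[F1 t.1 ⊔ F2 t.2]
      {ω | (T ω).1 < (t.1 : ℝ≥0∞) ∧ (T ω).2 < (t.2 : ℝ≥0∞)}) :
    (∀ s : ℝ≥0 × ℝ≥0, MeasurableSet[G1 s.1 ⊔ G2 s.2]
      {ω | extApp (u1 ω) (T ω).1 < (s.1 : ℝ≥0∞) ∧
           extApp (u2 ω) (T ω).2 < (s.2 : ℝ≥0∞)}) ∧
    ∀ A : Set Ω,
      (∀ t : ℝ≥0 × ℝ≥0, MeasurableSet[F1 t.1 ⊔ F2 t.2]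
        (A ∩ {ω | (T ω).1 < (t.1 : ℝ≥0∞) ∧ (T ω).2 < (t.2 : ℝ≥0∞)})) →
      ∀ s : ℝ≥0 × ℝ≥0, MeasurableSet[G1 s.1 ⊔ G2 s.2]
        (A ∩ {ω | extApp (u1 ω) (T ω).1 < (s.1 : ℝ≥0∞) ∧
                  extApp (u2 ω) (T ω).2 < (s.2 : ℝ≥0∞)}) := by
  have key : ∀ A : Set Ω,
      (∀ t : ℝ≥0 × ℝ≥0, MeasurableSet[F1 t.1 ⊔ F2 t.2]
        (A ∩ {ω | (T ω).1 < (t.1 : ℝ≥0∞) ∧ (T ω).2 < (t.2 : ℝ≥0∞)})) →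
      ∀ s : ℝ≥0 × ℝ≥0, MeasurableSet[G1 s.1 ⊔ G2 s.2]
        (A ∩ {ω | extApp (u1 ω) (T ω).1 < (s.1 : ℝ≥0∞) ∧
                  extApp (u2 ω) (T ω).2 < (s.2 : ℝ≥0∞)}) := by
    intro A hA s
    let d := TopologicalSpace.denseSeq ℝ≥0
    have hunion : A ∩ {ω | extApp (u1 ω) (T ω).1 < (s.1 : ℝ≥0∞) ∧
                  extApp (u2 ω) (T ω).2 < (s.2 : ℝ≥0∞)} =
        ⋃ (i : ℕ) (j : ℕ), (A ∩ {ω | (T ω).1 < (d i : ℝ≥0∞) ∧ (T ω).2 < (d j : ℝ≥0∞)}) ∩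
          ({ω | u1 ω (d i) < s.1} ∩ {ω | u2 ω (d j) < s.2}) := by
      ext ω
      simp only [Set.mem_inter_iff, Set.mem_ofPred_eq, Set.mem_iUnion,
        extApp_lt_iff_exists_denseSeq (hu1mono ω) (hu1rc ω),
        extApp_lt_iff_exists_denseSeq (hu2mono ω) (hu2rc ω)]
      constructor
      · rintro ⟨ha, ⟨i, hi, hi'⟩, ⟨j, hj, hj'⟩⟩
        exact ⟨i, j, ⟨ha, hi, hj⟩, hi', hj'⟩
      · rintro ⟨i, j, ⟨ha, hi, hj⟩, hi', hj'⟩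
        exact ⟨ha, ⟨i, hi, hi'⟩, ⟨j, hj, hj'⟩⟩
    rw [hunion]
    exact MeasurableSet.iUnion fun i => MeasurableSet.iUnion fun j =>
      measurableSet_sup_inter_inter (hFG1 (d i) s.1) (hFG2 (d j) s.2) (hA (d i, d j))
  refine ⟨fun s => ?_, key⟩
  simpa only [Set.univ_inter] using
    key Set.univ (fun t => by simpa only [Set.univ_inter] using hT t) s
end

section
/- Assume that for all t, s ∈ [0,∞) and every A ∈ F_t one has A ∩ {ω : u(ω,t) < s} ∈ G_s. Let τ : Ω → [0,∞] satisfy {τ < t} ∈ F_t for every t ≥ 0 (i.e., τ is a stopping time for the right-continuous augmentation of F). Then {u(τ) < s} ∈ G_s for every s ≥ 0 (i.e., u(τ) is a stopping time for the right-continuous augmentation of G), and every A ⊆ Ω with A ∩ {τ < t} ∈ F_t for all t ≥ 0 satisfies A ∩ {u(τ) < s} ∈ G_s for all s ≥ 0. -/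
/-!
By right-continuity and monotonicity of `u ω`, one has `u(τ) < s` exactly when `τ < q` and
`u(q) < s` for some `q` in a fixed countable dense set of times. Hence `A ∩ {u(τ) < s}` is the
countable union of the sets `(A ∩ {τ < q}) ∩ {u(q) < s}`, each in `G_s` by the hypothesis
relating `F` and `G`. The first claim is the case where `A` is the whole space.
-/

open MeasureTheory
open scoped NNReal ENNReal

/-- The value at `x` of a nondecreasing right-continuous time change is below `a` iff its value at
some time `q > x` of a given dense set is. For `x = ∞` both sides are false. -/
theorem extApp_lt_iff_exists_mem_dense {D : Set ℝ≥0} (hD : Dense D) {v : ℝ≥0 → ℝ≥0∞}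
    (hv : Monotone v) (hrc : ∀ t, ContinuousWithinAt v (Set.Ici t) t) (x a : ℝ≥0∞) :
    extApp v x < a ↔ ∃ q ∈ D, x < (q : ℝ≥0∞) ∧ v q < a := by
  induction x with
  | top => simp [extApp]
  | coe t =>
    simp only [extApp, ENNReal.coe_ne_top, if_false, ENNReal.toNNReal_coe, ENNReal.coe_lt_coe]
    constructor
    · intro h
      obtain ⟨b, hb, hsub⟩ := mem_nhdsGE_iff_exists_Ico_subset.1 ((hrc t).eventually_lt_const h)
      obtain ⟨q, hq, htq, hqb⟩ := hD.exists_between hb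
      exact ⟨q, hq, htq, hsub ⟨htq.le, hqb⟩⟩
    · rintro ⟨q, -, htq, hq⟩
      exact (hv htq.le).trans_lt hq

/-- one-parameter time change: let `F`, `G` be `[0,∞)`-indexed
filtrations on `Ω` and `u : Ω × [0,∞) → [0,∞]` nondecreasing and right-continuous
in the time variable, such that `A ∩ {u(·,t) < s} ∈ G_s` for every `t, s ≥ 0` and
`A ∈ F_t`.  If `τ : Ω → [0,∞]` satisfies `{τ < t} ∈ F_t` for every `t ≥ 0`, then
`{u(τ) < s} ∈ G_s` for every `s ≥ 0`, and every `A ⊆ Ω` with `A ∩ {τ < t} ∈ F_t`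
for all `t ≥ 0` satisfies `A ∩ {u(τ) < s} ∈ G_s` for all `s ≥ 0`. -/
theorem timeChange_stoppingTime
    {Ω : Type*} (F G : ℝ≥0 → MeasurableSpace Ω)
    (hF : Monotone F) (hG : Monotone G)
    (u : Ω → ℝ≥0 → ℝ≥0∞)
    (humono : ∀ ω, Monotone (u ω))
    (hurc : ∀ ω t, ContinuousWithinAt (u ω) (Set.Ici t) t)
    (hFG : ∀ (t s : ℝ≥0) (A : Set Ω), MeasurableSet[F t] A →
      MeasurableSet[G s] (A ∩ {ω | u ω t < (s : ℝ≥0∞)}))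
    (τ : Ω → ℝ≥0∞)
    (hτ : ∀ t : ℝ≥0, MeasurableSet[F t] {ω | τ ω < (t : ℝ≥0∞)}) :
    (∀ s : ℝ≥0, MeasurableSet[G s] {ω | extApp (u ω) (τ ω) < (s : ℝ≥0∞)}) ∧
    ∀ A : Set Ω,
      (∀ t : ℝ≥0, MeasurableSet[F t] (A ∩ {ω | τ ω < (t : ℝ≥0∞)})) →
      ∀ s : ℝ≥0, MeasurableSet[G s] (A ∩ {ω | extApp (u ω) (τ ω) < (s : ℝ≥0∞)}) := by
  have key : ∀ A : Set Ω,
      (∀ t : ℝ≥0, MeasurableSet[F t] (A ∩ {ω | τ ω < (t : ℝ≥0∞)})) →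
      ∀ s : ℝ≥0, MeasurableSet[G s] (A ∩ {ω | extApp (u ω) (τ ω) < (s : ℝ≥0∞)}) := by
    intro A hA s
    obtain ⟨D, hDc, hD⟩ := TopologicalSpace.exists_countable_dense ℝ≥0
    have hunion : A ∩ {ω | extApp (u ω) (τ ω) < (s : ℝ≥0∞)} =
        ⋃ q ∈ D, (A ∩ {ω | τ ω < (q : ℝ≥0∞)}) ∩ {ω | u ω q < (s : ℝ≥0∞)} := by
      ext ω
      simp only [Set.mem_inter_iff, Set.mem_ofPred_eq, Set.mem_iUnion, exists_prop,
        extApp_lt_iff_exists_mem_dense hD (humono ω) (hurc ω)]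
      grind
    rw [hunion]
    exact MeasurableSet.biUnion hDc fun q _ => hFG q s _ (hA q)
  refine ⟨fun s => ?_, key⟩
  simpa only [Set.univ_inter] using
    key Set.univ (fun t => by simpa only [Set.univ_inter] using hτ t) s
end

section
/- Let T ∈ (0,∞] and let θ : [0,T) → ℝ be differentiable with 0 < θ(t) ≤ π and θ′(t) ≥ 2·cot(θ(t)/4) for all t ∈ [0,T). Then cos(θ(t)/4) ≤ e^{−t/2}·cos(θ(0)/4) for every t ∈ [0,T); consequently, every t ∈ [0,T) with θ(t) < π satisfies t < log 2. -/
/-!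
The proof is a Grönwall argument in the variable `cos (θ / 4)`: the function
`s ↦ e^{s/2} cos (θ(s)/4)` has derivative
`e^{s/2} (cos (θ/4) / 2 - sin (θ/4) θ' / 4)`, which is nonpositive because `sin (θ/4) > 0` and
`θ' ≥ 2 cot (θ/4)`. So it is antitone, which is the exponential bound. If moreover `θ(t) < π`, then
`√2/2 < cos (θ(t)/4) ≤ e^{-t/2}`, and squaring gives `1/2 < e^{-t}`.
-/

open scoped ENNReal

/-- let `T ∈ (0,∞]` and `θ : [0,T) → ℝ` be differentiable with
`0 < θ(t) ≤ π` and `θ′(t) ≥ 2·cot(θ(t)/4)` on `[0,T)`.  Then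
`cos(θ(t)/4) ≤ e^{−t/2}·cos(θ(0)/4)` for every `t ∈ [0,T)`; consequently, every
`t ∈ [0,T)` with `θ(t) < π` satisfies `t < log 2`. -/
theorem theta_differential_inequality (T : ℝ≥0∞) (hT : 0 < T)
    (θ θ' : ℝ → ℝ)
    (hderiv : ∀ t : ℝ, 0 ≤ t → ENNReal.ofReal t < T →
      HasDerivWithinAt θ (θ' t) {x : ℝ | 0 ≤ x ∧ ENNReal.ofReal x < T} t)
    (hθpos : ∀ t : ℝ, 0 ≤ t → ENNReal.ofReal t < T → 0 < θ t)
    (hθle : ∀ t : ℝ, 0 ≤ t → ENNReal.ofReal t < T → θ t ≤ Real.pi)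
    (hθ' : ∀ t : ℝ, 0 ≤ t → ENNReal.ofReal t < T →
      2 * Real.cot (θ t / 4) ≤ θ' t) :
    ∀ t : ℝ, 0 ≤ t → ENNReal.ofReal t < T →
      (Real.cos (θ t / 4) ≤ Real.exp (-t / 2) * Real.cos (θ 0 / 4) ∧
        (θ t < Real.pi → t < Real.log 2)) := by
  intro t ht0 htT
  have hmem : ∀ s ∈ Set.Icc (0 : ℝ) t, ENNReal.ofReal s < T := fun s hs =>
    (ENNReal.ofReal_le_ofReal hs.2).trans_lt htT
  have hsub : Set.Icc (0 : ℝ) t ⊆ {x : ℝ | 0 ≤ x ∧ ENNReal.ofReal x < T} :=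
    fun s hs => ⟨hs.1, hmem s hs⟩
  have hg : ∀ s ∈ Set.Icc (0 : ℝ) t,
      HasDerivWithinAt (fun x => Real.exp (x / 2) * Real.cos (θ x / 4))
        (Real.exp (s / 2) * (1 / 2) * Real.cos (θ s / 4)
          + Real.exp (s / 2) * (-Real.sin (θ s / 4) * (θ' s / 4))) (Set.Icc 0 t) s := by
    intro s hs
    have h1 : HasDerivWithinAt θ (θ' s) (Set.Icc 0 t) s :=
      (hderiv s hs.1 (hmem s hs)).mono hsub
    exact (((hasDerivWithinAt_id s (Set.Icc 0 t)).div_const 2).exp).mul (h1.div_const 4).cos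
  have hanti : AntitoneOn (fun x => Real.exp (x / 2) * Real.cos (θ x / 4)) (Set.Icc 0 t) := by
    refine antitoneOn_of_hasDerivWithinAt_nonpos (convex_Icc 0 t)
      (fun s hs => (hg s hs).continuousWithinAt)
      (fun s hs => (hg s (interior_subset hs)).mono interior_subset) ?_
    intro s hs
    have hs' := interior_subset hs
    have hp := hθpos s hs'.1 (hmem s hs')
    have hl := hθle s hs'.1 (hmem s hs')
    have hd := hθ' s hs'.1 (hmem s hs')
    have hsin : 0 < Real.sin (θ s / 4) :=
      Real.sin_pos_of_pos_of_lt_pi (by linarith) (by linarith)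
    have hcot : 2 * Real.cos (θ s / 4) ≤ Real.sin (θ s / 4) * θ' s := by
      rw [Real.cot_eq_cos_div_sin, ← mul_div_assoc, div_le_iff₀ hsin] at hd
      linarith
    have hE := Real.exp_pos (s / 2)
    nlinarith [mul_le_mul_of_nonneg_left hcot hE.le]
  have hbound : Real.cos (θ t / 4) ≤ Real.exp (-t / 2) * Real.cos (θ 0 / 4) := by
    have h : Real.exp (t / 2) * Real.cos (θ t / 4) ≤ Real.exp (0 / 2) * Real.cos (θ 0 / 4) :=
      hanti ⟨le_rfl, ht0⟩ ⟨ht0, le_rfl⟩ ht0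
    rw [zero_div, Real.exp_zero, one_mul] at h
    calc Real.cos (θ t / 4)
        = Real.exp (-t / 2) * (Real.exp (t / 2) * Real.cos (θ t / 4)) := by
          rw [← mul_assoc, ← Real.exp_add, neg_div, neg_add_cancel, Real.exp_zero, one_mul]
      _ ≤ _ := mul_le_mul_of_nonneg_left h (Real.exp_pos _).le
  refine ⟨hbound, fun hlt => ?_⟩
  have hp := hθpos t ht0 htT
  have hcos : √2 / 2 < Real.cos (θ t / 4) := by
    rw [← Real.cos_pi_div_four]
    exact Real.cos_lt_cos_of_nonneg_of_le_pi (by linarith) (by linarith [Real.pi_pos])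
      (by linarith)
  have hE : √2 / 2 < Real.exp (-t / 2) :=
    hcos.trans_le (hbound.trans
      (mul_le_of_le_one_right (Real.exp_pos _).le (Real.cos_le_one _)))
  have hsq : Real.exp (-t / 2) * Real.exp (-t / 2) = Real.exp (-t) := by
    rw [← Real.exp_add, add_halves]
  have h2 : √2 * √2 = 2 := Real.mul_self_sqrt (by norm_num)
  have h3 : 1 / 2 < Real.exp (-t) := by
    rw [← hsq]
    nlinarith [Real.sqrt_nonneg 2]
  have h4 := (Real.log_lt_iff_lt_exp (by norm_num : (0 : ℝ) < 1 / 2)).2 h3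
  rw [one_div, Real.log_inv] at h4
  linarith
end
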